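/- Let n ≥ 2 and k ≥ 1 be integers, fix a primitive n-th root of unity ξ ∈ ℂ, and assume that there is no tuple I = (I₀, …, I_{n−1}) ∈ ℕ^{n} with I₀ + ⋯ + I_{n−1} = k and Σ_{i=0}^{n−1} I_i·ξ^i = 0 (this holds, for example, when n is prime and n ∤ k, and it implies gcd(k, n) = 1). In the polynomial ring R = ℂ[z][x₀, …, x_{n−1}], let D be the unique ℂ[z]-linear derivation with D(x_i) = x_{i+1} for 0 ≤ i ≤ n−2 and D(x_{n−1}) = z·x₀, let P_k ⊆ R be the ℂ[z]-submodule of polynomials homogeneous of total degree k in x₀, …, x_{n−1}, and define θ : P_k → P_k by θ(f) = ∂f/∂z + D(f). Then θ is injective, its cokernel is a finite-dimensional ℂ-vector space, and n·dim_ℂ coker(θ) equals the binomial coefficient C(k+n−1, n−1). -/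

import Mathlib

/-!
Give `z` weight `n` and `x_i` weight `i`. Then `D` raises the weight by exactly one, while `∂/∂z`
lowers it. On the polynomials of a fixed weight nothing is lost by setting `z = 1`, where `D`
becomes the derivation permuting `x₀, …, x_{n-1}` cyclically; a discrete Fourier transform of the
variables diagonalises it, with eigenvalue `∑ I_j ξ^j ≠ 0` on the monomial of exponent `I`. So `D`
is injective on each weight component of `P_k`, and `θ`, whose leading part is `D`, raises the
weight filtration `F_d` (weight `< d`) of `P_k` by exactly one level.

Hence `θ` is injective, and the image of `F_{d+1}` in the cokernel has dimension
`dim F_{d+1} - dim F_d`. For large `d`, `F_{d+n}` is the direct sum of `z F_d` and the polynomials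
of degree `k` in the `x_i` alone, so `dim F_{d+n} = dim F_d + C(k+n-1, n-1)`. The dimensions of the
increasing filtration of the cokernel are therefore eventually periodic, thus eventually constant,
and `n` consecutive increments sum to `C(k+n-1, n-1)`.
-/

open MvPolynomial

/-- We model `R = ℂ[z][x₀, …, x_{n-1}]` as `MvPolynomial (Fin (n+1)) ℂ`, the variable of
index `0` playing the role of `z` and the variable of index `i+1` playing the role of
`x_i`.  These are the values on the variables of the derivation `D` with `D(z) = 0` (so
`D` is `ℂ[z]`-linear), `D(x_i) = x_{i+1}` for `0 ≤ i ≤ n-2`, and `D(x_{n-1}) = z·x₀`. -/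
noncomputable def airyDvals (n : ℕ) : Fin (n + 1) → MvPolynomial (Fin (n + 1)) ℂ :=
  fun j =>
    if (j : ℕ) = 0 then 0
    else if h : (j : ℕ) + 1 < n + 1 then MvPolynomial.X ⟨(j : ℕ) + 1, h⟩
    else MvPolynomial.X 0 * MvPolynomial.X 1

/-- The operator `θ(f) = ∂f/∂z + D(f)`. -/
noncomputable def airyTheta (n : ℕ) :
    MvPolynomial (Fin (n + 1)) ℂ →ₗ[ℂ] MvPolynomial (Fin (n + 1)) ℂ :=
  (MvPolynomial.pderiv 0).toLinearMap +
    (MvPolynomial.mkDerivation ℂ (airyDvals n)).toLinearMap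

/-- `P_k`: polynomials homogeneous of total degree `k` in `x₀, …, x_{n-1}` (the variable
`z` carrying weight `0`). -/
noncomputable def airyPk (n k : ℕ) : Submodule ℂ (MvPolynomial (Fin (n + 1)) ℂ) :=
  MvPolynomial.weightedHomogeneousSubmodule ℂ (fun j => if (j : ℕ) = 0 then 0 else 1) k

section Filtration

variable {R V : Type*} [Ring R] [AddCommGroup V] [Module R V]
  {F : ℕ → Submodule R V} {T D : V →ₗ[R] V}

/-- An increasing exhaustive filtration of a module, indexed by `ℕ` and starting at `0`. -/
structure IsExhaustiveFiltration (F : ℕ → Submodule R V) : Prop where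
  monotone : Monotone F
  zero_eq_bot : F 0 = ⊥
  exists_mem (v : V) : ∃ d, v ∈ F d

/-- An endomorphism that raises the filtration level of every vector by exactly one, i.e. a strict
filtered map of degree one whose associated graded map is injective. -/
def RaisesLevelByOne (F : ℕ → Submodule R V) (T : V →ₗ[R] V) : Prop :=
  ∀ d v, T v ∈ F (d + 1) ↔ v ∈ F d

lemma RaisesLevelByOne.injective (hT : RaisesLevelByOne F T) (hF : IsExhaustiveFiltration F) :
    Function.Injective T := by
  rw [injective_iff_map_eq_zero]
  intro v hv
  have hv0 : v ∈ F 0 := (hT 0 v).1 (hv ▸ zero_mem _)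
  rwa [hF.zero_eq_bot, Submodule.mem_bot] at hv0

lemma RaisesLevelByOne.of_sub_mem (hD : RaisesLevelByOne F D) (hF : IsExhaustiveFiltration F)
    (hTD : ∀ d, ∀ v ∈ F d, T v - D v ∈ F d) : RaisesLevelByOne F T := by
  have hmem {d e : ℕ} {v : V} (hv : v ∈ F e) (hde : e ≤ d) : T v ∈ F d ↔ D v ∈ F d :=
    Submodule.sub_mem_iff_left _ (hF.monotone hde (hTD e v hv)) |>.symm.trans <| by simp
  refine fun d v => ⟨fun hTv => ?_, fun hv => (hmem hv d.le_succ).2 ((hD d v).2 hv)⟩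
  obtain ⟨e, hv⟩ := hF.exists_mem v
  induction e with
  | zero => exact hF.monotone (Nat.zero_le d) hv
  | succ e ih =>
    rcases Nat.lt_or_ge e d with hed | hde
    · exact hF.monotone hed hv
    · exact ih ((hD e v).1 ((hmem hv le_rfl).1 (hF.monotone (by lia) hTv)))

end Filtration

section Cokernel

open Module

variable {K V : Type*} [DivisionRing K] [AddCommGroup V] [Module K V]
  {F : ℕ → Submodule K V} {T : V →ₗ[K] V}

/-- The filtration induced on the cokernel of `T`, with the index shifted by one: the image of
`F (d + 1)`. -/
def cokerFiltration (F : ℕ → Submodule K V) (T : V →ₗ[K] V) (d : ℕ) :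
    Submodule K (V ⧸ LinearMap.range T) :=
  (F (d + 1)).map (LinearMap.range T).mkQ

lemma cokerFiltration_monotone (hF : IsExhaustiveFiltration F) : Monotone (cokerFiltration F T) :=
  fun _ _ hde => Submodule.map_mono (hF.monotone (Nat.succ_le_succ hde))

instance [∀ d, FiniteDimensional K (F d)] (d : ℕ) :
    FiniteDimensional K (cokerFiltration F T d) :=
  inferInstanceAs (FiniteDimensional K ((F (d + 1)).map (LinearMap.range T).mkQ))

lemma finrank_cokerFiltration_add [∀ d, FiniteDimensional K (F d)]
    (hF : IsExhaustiveFiltration F) (hT : RaisesLevelByOne F T) (d : ℕ) :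
    finrank K (cokerFiltration F T d) + finrank K (F d) = finrank K (F (d + 1)) := by
  let q := (LinearMap.range T).mkQ.domRestrict (F (d + 1))
  let T' : F d →ₗ[K] F (d + 1) := T.restrict fun v hv => (hT d v).2 hv
  have hker : LinearMap.ker q = LinearMap.range T' := by
    ext ⟨v, hv⟩
    simp only [q, T', LinearMap.mem_ker, LinearMap.domRestrict_apply, Submodule.mkQ_apply,
      Submodule.Quotient.mk_eq_zero, LinearMap.mem_range, Subtype.exists, Subtype.ext_iff,
      LinearMap.coe_restrict_apply]
    constructor
    · rintro ⟨u, rfl⟩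
      exact ⟨u, (hT d u).1 hv, rfl⟩
    · rintro ⟨u, -, hu⟩
      exact ⟨u, hu⟩
  have hT' : Function.Injective T' := fun u v huv =>
    Subtype.ext (hT.injective hF (congrArg Subtype.val huv))
  rw [← q.finrank_range_add_finrank_ker, hker, LinearMap.finrank_range_of_inj hT',
    LinearMap.range_domRestrict, cokerFiltration]

lemma cokerFiltration_eq_top_of_forall_le (hF : IsExhaustiveFiltration F) {N : ℕ}
    (hN : ∀ d, N ≤ d → cokerFiltration F T d ≤ cokerFiltration F T N) :
    cokerFiltration F T N = ⊤ := by
  rw [eq_top_iff]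
  intro y _
  obtain ⟨v, rfl⟩ := Submodule.mkQ_surjective _ y
  obtain ⟨e, hv⟩ := hF.exists_mem v
  have hv' : v ∈ F (max N e + 1) := hF.monotone (by lia) hv
  exact hN _ (le_max_left N e) (Submodule.mem_map_of_mem hv')

/-- The dimensions of the induced filtration on the cokernel are the increments of the dimensions of
`F`; periodicity of the increments makes that filtration stationary. -/
theorem finrank_quotient_range_of_periodic_growth [∀ d, FiniteDimensional K (F d)]
    (hF : IsExhaustiveFiltration F) (hT : RaisesLevelByOne F T) {n N B : ℕ} (hn : 0 < n)
    (hgrowth : ∀ d, N ≤ d → finrank K (F (d + n)) = finrank K (F d) + B) :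
    FiniteDimensional K (V ⧸ LinearMap.range T) ∧
      n * finrank K (V ⧸ LinearMap.range T) = B := by
  have hincr := finrank_cokerFiltration_add hF hT
  have hmono := cokerFiltration_monotone (T := T) hF
  have hstep (d : ℕ) (hd : N ≤ d) : cokerFiltration F T (d + 1) = cokerFiltration F T d := by
    have hperiod : cokerFiltration F T d = cokerFiltration F T (d + n) := by
      refine Submodule.eq_of_le_of_finrank_eq (hmono (by lia)) ?_
      have hd1 := hgrowth (d + 1) (by lia)
      rw [add_right_comm] at hd1
      have := hgrowth d hd
      have := hincr d
      have := hincr (d + n)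
      lia
    exact ((hmono (by lia)).trans hperiod.ge).antisymm (hmono d.le_succ)
  have hconst (d : ℕ) (hd : N ≤ d) : cokerFiltration F T d = cokerFiltration F T N := by
    induction d, hd using Nat.le_induction with
    | base => rfl
    | succ d hd ih => rw [hstep d hd, ih]
  have htop : cokerFiltration F T N = ⊤ :=
    cokerFiltration_eq_top_of_forall_le hF fun d hd => (hconst d hd).le
  have hfin : FiniteDimensional K (V ⧸ LinearMap.range T) :=
    Module.finite_def.2 (htop ▸ Module.Finite.iff_fg.1 inferInstance)
  refine ⟨hfin, ?_⟩
  have hlinear (r : ℕ) : finrank K (F (N + r)) =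
      finrank K (F N) + r * finrank K (V ⧸ LinearMap.range T) := by
    induction r with
    | zero => simp
    | succ r ih =>
      rw [← add_assoc, ← hincr, hconst _ (by lia), htop, finrank_top, ih]
      ring
  have := hlinear n
  have := hgrowth N le_rfl
  lia

end Cokernel

section LinearDerivation

variable {σ τ R : Type*} [CommSemiring R]

lemma algHom_derivation_apply {B : Type*} [CommSemiring B] [Algebra R B]
    (φ : MvPolynomial σ R →ₐ[R] B)
    {D : Derivation R (MvPolynomial σ R) (MvPolynomial σ R)} {D' : Derivation R B B}
    (hX : ∀ i, φ (D (X i)) = D' (φ (X i))) (f : MvPolynomial σ R) : φ (D f) = D' (φ f) := by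
  induction f using MvPolynomial.induction_on with
  | C a =>
    rw [derivation_C, map_zero, ← algebraMap_eq, AlgHom.commutes, Derivation.map_algebraMap]
  | add p q hp hq => simp only [map_add, hp, hq]
  | mul_X p i hp => simp only [Derivation.leibniz, smul_eq_mul, map_add, map_mul, hp, hX]

variable [Fintype σ]

/-- The derivation of `R[x_i]` that acts on linear forms through the matrix `A`, i.e.
`x_i ↦ ∑ j, A i j x_j`. -/
noncomputable def linearDerivation (A : Matrix σ σ R) :
    Derivation R (MvPolynomial σ R) (MvPolynomial σ R) :=
  mkDerivation R A.toMvPolynomial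

lemma linearDerivation_X (A : Matrix σ σ R) (i : σ) :
    linearDerivation A (X i) = A.toMvPolynomial i :=
  mkDerivation_X ..

lemma linearDerivation_toMvPolynomial (P : Matrix τ σ R) (A : Matrix σ σ R) (i : τ) :
    linearDerivation A (P.toMvPolynomial i) = (P * A).toMvPolynomial i := by
  rw [Matrix.toMvPolynomial_mul, Matrix.toMvPolynomial, map_sum, map_sum]
  refine Finset.sum_congr rfl fun j _ => ?_
  rw [← C_mul_X_eq_monomial, C_mul', Derivation.map_smul, linearDerivation_X, map_smul,
    bind₁_X_right]

lemma bind₁_linearDerivation {A B P : Matrix σ σ R} (hAB : A * P = P * B) (f : MvPolynomial σ R) :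
    bind₁ P.toMvPolynomial (linearDerivation A f) =
      linearDerivation B (bind₁ P.toMvPolynomial f) := by
  refine algHom_derivation_apply _ (fun i => ?_) f
  rw [linearDerivation_X, ← Matrix.toMvPolynomial_mul, hAB, bind₁_X_right,
    linearDerivation_toMvPolynomial]

variable [DecidableEq σ]

lemma bind₁_toMvPolynomial_injective {P : Matrix σ σ R} (hP : IsUnit P) :
    Function.Injective (bind₁ P.toMvPolynomial) := by
  obtain ⟨Q, hPQ⟩ := hP.exists_right_inv
  refine Function.LeftInverse.injective (g := bind₁ Q.toMvPolynomial) fun f => ?_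
  simp only [bind₁_bind₁, ← Matrix.toMvPolynomial_mul, hPQ, Matrix.toMvPolynomial_one]
  exact aeval_X_left_apply f

lemma toMvPolynomial_diagonal (a : σ → R) (i : σ) :
    (Matrix.diagonal a).toMvPolynomial i = C (a i) * X i := by
  rw [Matrix.toMvPolynomial, Finset.sum_eq_single i, Matrix.diagonal_apply_eq, C_mul_X_eq_monomial]
  · intro j _ hji
    rw [Matrix.diagonal_apply_ne _ hji.symm, map_zero]
  · simp

lemma linearDerivation_diagonal_monomial (a : σ → R) (m : σ →₀ ℕ) (r : R) :
    linearDerivation (Matrix.diagonal a) (monomial m r) =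
      monomial m (Finsupp.weight a m * r) := by
  rw [linearDerivation, mkDerivation_monomial, Finsupp.weight_apply, Finsupp.sum_mul, Finsupp.sum,
    Finset.smul_sum, Finsupp.sum, map_sum]
  refine Finset.sum_congr rfl fun i hi => ?_
  have hle : Finsupp.single i 1 ≤ m :=
    Finsupp.single_le_iff.2 (Nat.one_le_iff_ne_zero.2 (Finsupp.mem_support_iff.1 hi))
  rw [toMvPolynomial_diagonal, C_mul_X_eq_monomial, smul_eq_mul, monomial_mul,
    tsub_add_cancel_of_le hle, smul_monomial]
  congr 1
  simp only [smul_eq_mul, nsmul_eq_mul]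
  ring

lemma coeff_linearDerivation_diagonal (a : σ → R) (m : σ →₀ ℕ) (f : MvPolynomial σ R) :
    coeff m (linearDerivation (Matrix.diagonal a) f) = Finsupp.weight a m * coeff m f := by
  induction f using MvPolynomial.induction_on' with
  | add p q hp hq => simp only [map_add, coeff_add, hp, hq, mul_add]
  | monomial s r =>
    rw [linearDerivation_diagonal_monomial, coeff_monomial, coeff_monomial]
    split_ifs with hsm
    · rw [hsm]
    · rw [mul_zero]

/-- In the eigencoordinates of `A`, every monomial is an eigenvector of the derivation. -/
lemma eq_zero_of_linearDerivation_eq_zero [IsDomain R] {A P : Matrix σ σ R} {a : σ → R} {k : ℕ}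
    (hP : IsUnit P) (hAP : A * P = P * Matrix.diagonal a)
    (ha : ∀ m : σ →₀ ℕ, m.degree = k → Finsupp.weight a m ≠ 0)
    {f : MvPolynomial σ R} (hf : f.IsHomogeneous k) (hDf : linearDerivation A f = 0) : f = 0 := by
  refine bind₁_toMvPolynomial_injective hP ?_
  rw [map_zero]
  ext m
  rw [coeff_zero]
  by_contra hm
  have hdeg : m.degree = k := by
    have := (hf.aeval _ P.toMvPolynomial_isHomogeneous)
    rw [one_mul] at this
    rw [Finsupp.degree_eq_weight_one]
    exact this hm
  have hcoeff := coeff_linearDerivation_diagonal a m (bind₁ P.toMvPolynomial f)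
  rw [← bind₁_linearDerivation hAP, hDf, map_zero, coeff_zero] at hcoeff
  exact mul_ne_zero (ha m hdeg) hm hcoeff.symm

end LinearDerivation

section Weighted

variable {σ R M : Type*} [CommSemiring R]

lemma isWeightedHomogeneous_mkDerivation [AddCommMonoid M] {w : σ → M}
    {v : σ → MvPolynomial σ R} {c : M} (hv : ∀ i, IsWeightedHomogeneous w (v i) (w i + c))
    {f : MvPolynomial σ R} {d : M} (hf : IsWeightedHomogeneous w f d) :
    IsWeightedHomogeneous w (mkDerivation R v f) (d + c) := by
  induction hf using IsWeightedHomogeneous.induction_on with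
  | zero => rw [map_zero]; exact isWeightedHomogeneous_zero R w _
  | add p q _ _ hp hq => rw [map_add]; exact hp.add hq
  | monomial m r hm =>
    rw [mkDerivation_monomial, Finsupp.sum, Finset.smul_sum]
    refine IsWeightedHomogeneous.sum _ _ _ fun i hi => ?_
    have hweight : Finsupp.weight w (m - Finsupp.single i 1) + (w i + c) = d + c := by
      rw [← add_assoc, Finsupp.weight_sub_single_add (Finsupp.mem_support_iff.1 hi), hm]
    rw [smul_eq_mul, ← C_mul', ← hweight]
    exact ((isWeightedHomogeneous_monomial w _ _ rfl).mul (hv i)).C_mul r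

lemma isWeightedHomogeneous_weightedHomogeneousComponent {N : Type*} [AddCommMonoid M]
    [AddCommMonoid N] {w : σ → M} {d : M} {f : MvPolynomial σ R} (hf : IsWeightedHomogeneous w f d)
    (w' : σ → N) (e : N) : IsWeightedHomogeneous w (weightedHomogeneousComponent w' e f) d := by
  classical
  refine fun m hm => hf fun hm0 => hm ?_
  rw [coeff_weightedHomogeneousComponent, hm0, ite_self]

lemma weightedHomogeneousComponent_mkDerivation [AddCancelCommMonoid M] {w : σ → M}
    {v : σ → MvPolynomial σ R} {c : M} (hv : ∀ i, IsWeightedHomogeneous w (v i) (w i + c))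
    (d : M) (f : MvPolynomial σ R) :
    weightedHomogeneousComponent w (d + c) (mkDerivation R v f) =
      mkDerivation R v (weightedHomogeneousComponent w d f) := by
  classical
  induction f using MvPolynomial.induction_on' with
  | add p q hp hq => simp only [map_add, hp, hq]
  | monomial m r =>
    have hm := isWeightedHomogeneous_monomial w m r rfl
    rw [weightedHomogeneousComponent_of_mem (isWeightedHomogeneous_mkDerivation hv hm),
      weightedHomogeneousComponent_of_mem hm]
    simp only [add_left_inj]
    split_ifs
    · rfl
    · rw [map_zero]

end Weighted

section Support

variable {σ R : Type*} [CommSemiring R]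

lemma finrank_restrictSupport [StrongRankCondition R] (s : Set (σ →₀ ℕ)) :
    Module.finrank R (restrictSupport R s) = s.ncard :=
  Module.finrank_eq_nat_card_basis (basisRestrictSupport R s)

lemma finite_restrictSupport {s : Set (σ →₀ ℕ)} (hs : s.Finite) :
    Module.Finite R (restrictSupport R s) :=
  have : Finite s := hs
  Module.Finite.of_basis (basisRestrictSupport R s)

lemma restrictSupport_inter (s t : Set (σ →₀ ℕ)) :
    restrictSupport R (s ∩ t) = restrictSupport R s ⊓ restrictSupport R t := by
  ext f
  simp only [Submodule.mem_inf, mem_restrictSupport_iff, Set.subset_inter_iff]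

end Support

section Dehomogenization

variable {R M : Type*} [CommSemiring R] [AddCommMonoid M] {n : ℕ}

lemma weight_finCons (a : M) (w : Fin n → M) (m : Fin (n + 1) →₀ ℕ) :
    Finsupp.weight (Fin.cons a w : Fin (n + 1) → M) m = m 0 • a + Finsupp.weight w m.tail := by
  simp only [Finsupp.weight_eq_sum, Fin.sum_univ_succ, Fin.cons_zero, Fin.cons_succ,
    Finsupp.tail_apply]

/-- The substitution `x₀ = 1` in a polynomial ring in `x₀, …, x_n`, with the remaining variables
renumbered from `0`. -/
noncomputable def dehomogenize (R : Type*) [CommSemiring R] (n : ℕ) :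
    MvPolynomial (Fin (n + 1)) R →ₐ[R] MvPolynomial (Fin n) R :=
  aeval (Fin.cons 1 X)

lemma dehomogenize_X_zero : dehomogenize R n (X 0) = 1 := by
  rw [dehomogenize, aeval_X, Fin.cons_zero]

lemma dehomogenize_X_succ (i : Fin n) : dehomogenize R n (X i.succ) = X i := by
  rw [dehomogenize, aeval_X, Fin.cons_succ]

lemma dehomogenize_monomial (m : Fin (n + 1) →₀ ℕ) (r : R) :
    dehomogenize R n (monomial m r) = monomial m.tail r := by
  rw [dehomogenize, aeval_monomial, Finsupp.prod_fintype _ _ fun _ => pow_zero _,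
    Fin.prod_univ_succ, monomial_eq, Finsupp.prod_fintype _ _ fun _ => pow_zero _]
  simp only [Fin.cons_zero, Fin.cons_succ, one_pow, one_mul, Finsupp.tail_apply, algebraMap_eq]

lemma isWeightedHomogeneous_dehomogenize {w : Fin n → M} {d : M}
    {f : MvPolynomial (Fin (n + 1)) R}
    (hf : IsWeightedHomogeneous (Fin.cons 0 w : Fin (n + 1) → M) f d) :
    IsWeightedHomogeneous w (dehomogenize R n f) d := by
  induction hf using IsWeightedHomogeneous.induction_on with
  | zero => rw [map_zero]; exact isWeightedHomogeneous_zero R w d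
  | add p q _ _ hp hq => rw [map_add]; exact hp.add hq
  | monomial m r hm =>
    rw [dehomogenize_monomial]
    rw [weight_finCons, smul_zero, zero_add] at hm
    exact isWeightedHomogeneous_monomial w _ r hm

/-- Among monomials of a fixed weight, the exponent of `x₀` is determined by the others. -/
lemma coeff_tail_dehomogenize {a : ℕ} (ha : 0 < a) {w : Fin n → ℕ} {m : Fin (n + 1) →₀ ℕ}
    {f : MvPolynomial (Fin (n + 1)) R}
    (hf : IsWeightedHomogeneous (Fin.cons a w : Fin (n + 1) → ℕ) f
      (Finsupp.weight (Fin.cons a w : Fin (n + 1) → ℕ) m)) :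
    coeff m.tail (dehomogenize R n f) = coeff m f := by
  induction hf using IsWeightedHomogeneous.induction_on with
  | zero => simp only [map_zero, coeff_zero]
  | add p q _ _ hp hq => simp only [map_add, coeff_add, hp, hq]
  | monomial m' r hm' =>
    have htail : m'.tail = m.tail ↔ m' = m := by
      refine ⟨fun h => ?_, fun h => h ▸ rfl⟩
      rw [weight_finCons, weight_finCons, h, add_left_inj, smul_eq_mul, smul_eq_mul,
        Nat.mul_left_inj ha.ne'] at hm'
      rw [← m'.cons_tail, ← m.cons_tail, h, hm']
    simp only [dehomogenize_monomial, coeff_monomial, htail]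

lemma eq_zero_of_dehomogenize_eq_zero {a : ℕ} (ha : 0 < a) {w : Fin n → ℕ} {d : ℕ}
    {f : MvPolynomial (Fin (n + 1)) R}
    (hf : IsWeightedHomogeneous (Fin.cons a w : Fin (n + 1) → ℕ) f d)
    (hf0 : dehomogenize R n f = 0) : f = 0 := by
  ext m
  by_contra hm
  obtain rfl := hf hm
  exact hm (by rw [← coeff_tail_dehomogenize ha hf, hf0, coeff_zero, coeff_zero])

end Dehomogenization

section CyclicMatrix

variable {R : Type*} [CommSemiring R]

lemma linearDerivation_permMatrix_X {σ : Type*} [Fintype σ] [DecidableEq σ] (e : Equiv.Perm σ)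
    (i : σ) : linearDerivation (e.permMatrix R) (X i) = X (e i) := by
  rw [linearDerivation_X, Matrix.toMvPolynomial, Finset.sum_eq_single (e i)]
  · simp only [PEquiv.toMatrix_apply, Equiv.toPEquiv_apply, Option.mem_def, if_true, X]
  · intro j _ hj
    simp only [PEquiv.toMatrix_apply, Equiv.toPEquiv_apply, Option.mem_some_iff, hj.symm, if_false,
      map_zero]
  · simp

lemma finRotate_val_add {n : ℕ} (i : Fin n) :
    (finRotate n i : ℕ) + (if (i : ℕ) + 1 = n then n else 0) = i + 1 := by
  obtain _ | n := n
  · exact i.elim0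
  induction i using Fin.lastCases with
  | last => simp
  | cast i => simp [Fin.coeSucc_eq_succ, i.2.ne]

lemma pow_finRotate {n : ℕ} {ξ : R} (hξ : ξ ^ n = 1) (i : Fin n) :
    ξ ^ (finRotate n i : ℕ) = ξ ^ ((i : ℕ) + 1) := by
  rw [← finRotate_val_add, pow_add]
  split_ifs
  · rw [hξ, mul_one]
  · rw [pow_zero, mul_one]

end CyclicMatrix

section Fourier

variable {R : Type*} [CommRing R] {n : ℕ}

/-- The discrete Fourier matrix `(ξ ^ (i * j))`. -/
def fourierMatrix (ξ : R) (n : ℕ) : Matrix (Fin n) (Fin n) R :=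
  Matrix.vandermonde fun i => ξ ^ (i : ℕ)

lemma isUnit_fourierMatrix {K : Type*} [Field K] {ξ : K} (hξ : IsPrimitiveRoot ξ n) :
    IsUnit (fourierMatrix ξ n) := by
  rw [Matrix.isUnit_iff_isUnit_det, isUnit_iff_ne_zero, fourierMatrix,
    Matrix.det_vandermonde_ne_zero_iff]
  exact fun i j hij => Fin.ext (hξ.pow_inj i.2 j.2 hij)

lemma permMatrix_finRotate_mul_fourierMatrix {ξ : R} (hξ : ξ ^ n = 1) :
    (finRotate n).permMatrix R * fourierMatrix ξ n =
      fourierMatrix ξ n * Matrix.diagonal fun j : Fin n => ξ ^ (j : ℕ) := by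
  ext i j
  rw [PEquiv.toMatrix_toPEquiv_mul, Matrix.mul_diagonal, Matrix.submatrix_apply, id_eq,
    fourierMatrix, Matrix.vandermonde_apply, Matrix.vandermonde_apply, pow_finRotate hξ]
  ring

end Fourier

lemma ncard_setOf_degree_eq (σ : Type*) [Fintype σ] (k : ℕ) :
    {I : σ →₀ ℕ | I.degree = k}.ncard = (Fintype.card σ + k - 1).choose k := by
  classical
  have hset : {I : σ →₀ ℕ | I.degree = k} = (Finset.univ : Finset σ).finsuppAntidiag k := by
    ext I
    simp [Finset.mem_finsuppAntidiag, Finsupp.degree_eq_sum]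
  rw [hset, Set.ncard_coe_finset, Finset.card_finsuppAntidiag_nat_eq_choose, Finset.card_univ]

section Airy

variable {n k : ℕ}

/-- The derivation `D` of `ℂ[z][x₀, …, x_{n-1}]`. -/
noncomputable abbrev airyD (n : ℕ) :
    Derivation ℂ (MvPolynomial (Fin (n + 1)) ℂ) (MvPolynomial (Fin (n + 1)) ℂ) :=
  mkDerivation ℂ (airyDvals n)

/-- The grading of `ℂ[z][x₀, …, x_{n-1}]` defining `P_k`: `z` has degree `0` and each `x_i` has
degree `1`. -/
def airyDegree (n : ℕ) : Fin (n + 1) → ℕ :=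
  Fin.cons 0 1

/-- The grading of `ℂ[z][x₀, …, x_{n-1}]` for which `D` has degree one: `z` has weight `n` and `x_i`
has weight `i`. -/
def airyWeight (n : ℕ) : Fin (n + 1) → ℕ :=
  Fin.cons n fun i => i

lemma mem_airyPk {f : MvPolynomial (Fin (n + 1)) ℂ} :
    f ∈ airyPk n k ↔ IsWeightedHomogeneous (airyDegree n) f k := by
  have hdeg : airyDegree n = fun j : Fin (n + 1) => if (j : ℕ) = 0 then 0 else 1 := by
    ext j
    induction j using Fin.cases <;> simp [airyDegree]
  rw [airyPk, mem_weightedHomogeneousSubmodule, hdeg]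

lemma weight_airyDegree (m : Fin (n + 1) →₀ ℕ) :
    Finsupp.weight (airyDegree n) m = m.tail.degree := by
  rw [airyDegree, weight_finCons, smul_zero, zero_add, Finsupp.degree_eq_weight_one]
  rfl

lemma weight_airyWeight (m : Fin (n + 1) →₀ ℕ) :
    Finsupp.weight (airyWeight n) m =
      n * m 0 + Finsupp.weight (fun i : Fin n => (i : ℕ)) m.tail := by
  rw [airyWeight, weight_finCons, smul_eq_mul, mul_comm]

lemma airyDvals_zero : airyDvals n 0 = 0 :=
  if_pos rfl

lemma airyDvals_succ (i : Fin n) :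
    airyDvals n i.succ = (if (i : ℕ) + 1 = n then X 0 else 1) * X (finRotate n i).succ := by
  obtain _ | n := n
  · exact i.elim0
  induction i using Fin.lastCases with
  | last => simp [airyDvals]
  | cast i => simp [airyDvals, Fin.coeSucc_eq_succ, i.2.ne, Fin.ext_iff]

lemma airyDvals_isWeightedHomogeneous {w : Fin (n + 1) → ℕ} {c : ℕ}
    (hw : ∀ i : Fin n,
      (if (i : ℕ) + 1 = n then w 0 else 0) + w (finRotate n i).succ = w i.succ + c)
    (j : Fin (n + 1)) : IsWeightedHomogeneous w (airyDvals n j) (w j + c) := by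
  induction j using Fin.cases with
  | zero => rw [airyDvals_zero]; exact isWeightedHomogeneous_zero ..
  | succ i =>
    rw [airyDvals_succ, ← hw i]
    refine IsWeightedHomogeneous.mul ?_ (isWeightedHomogeneous_X ℂ w _)
    split_ifs
    · exact isWeightedHomogeneous_X ℂ w 0
    · exact isWeightedHomogeneous_one ℂ w

lemma airyDvals_isWeightedHomogeneous_airyDegree (j : Fin (n + 1)) :
    IsWeightedHomogeneous (airyDegree n) (airyDvals n j) (airyDegree n j + 0) :=
  airyDvals_isWeightedHomogeneous (fun i => by simp [airyDegree]) j

lemma airyDvals_isWeightedHomogeneous_airyWeight (j : Fin (n + 1)) :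
    IsWeightedHomogeneous (airyWeight n) (airyDvals n j) (airyWeight n j + 1) :=
  airyDvals_isWeightedHomogeneous (fun i => (add_comm _ _).trans (finRotate_val_add i)) j

lemma dehomogenize_airyD (f : MvPolynomial (Fin (n + 1)) ℂ) :
    dehomogenize ℂ n (airyD n f) =
      linearDerivation ((finRotate n).permMatrix ℂ) (dehomogenize ℂ n f) := by
  refine algHom_derivation_apply _ (fun j => ?_) f
  rw [mkDerivation_X]
  induction j using Fin.cases with
  | zero => rw [airyDvals_zero, dehomogenize_X_zero, map_zero, Derivation.map_one_eq_zero]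
  | succ i =>
    rw [airyDvals_succ, map_mul, dehomogenize_X_succ, dehomogenize_X_succ,
      linearDerivation_permMatrix_X, apply_ite (dehomogenize ℂ n), dehomogenize_X_zero, map_one,
      ite_self, one_mul]

/-- At `z = 1` the derivation permutes the `x_i` cyclically, so its eigenvalues in degree `k` are
the sums of `k` powers of `ξ`. -/
lemma eq_zero_of_airyD_eq_zero (hn : 0 < n) {ξ : ℂ} (hξ : IsPrimitiveRoot ξ n)
    (hI : ∀ I : Fin n →₀ ℕ, I.degree = k → Finsupp.weight (fun j : Fin n => ξ ^ (j : ℕ)) I ≠ 0)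
    {f : MvPolynomial (Fin (n + 1)) ℂ} (hf : f ∈ airyPk n k) {d : ℕ}
    (hfd : IsWeightedHomogeneous (airyWeight n) f d) (hDf : airyD n f = 0) : f = 0 := by
  refine eq_zero_of_dehomogenize_eq_zero hn hfd ?_
  refine eq_zero_of_linearDerivation_eq_zero (isUnit_fourierMatrix hξ)
    (permMatrix_finRotate_mul_fourierMatrix hξ.pow_eq_one) hI
    (isWeightedHomogeneous_dehomogenize (mem_airyPk.1 hf)) ?_
  rw [← dehomogenize_airyD, hDf, map_zero]

lemma airyD_mem_airyPk {f : MvPolynomial (Fin (n + 1)) ℂ} (hf : f ∈ airyPk n k) :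
    airyD n f ∈ airyPk n k :=
  mem_airyPk.2 <|
    isWeightedHomogeneous_mkDerivation airyDvals_isWeightedHomogeneous_airyDegree (mem_airyPk.1 hf)

lemma airyTheta_mem_airyPk {f : MvPolynomial (Fin (n + 1)) ℂ} (hf : f ∈ airyPk n k) :
    airyTheta n f ∈ airyPk n k :=
  add_mem (mem_airyPk.2 ((mem_airyPk.1 hf).pderiv (add_zero k))) (airyD_mem_airyPk hf)

/-- The operator `D` on `P_k`. -/
noncomputable def airyDPk (n k : ℕ) : Module.End ℂ (airyPk n k) :=
  (airyD n).toLinearMap.restrict fun _ => airyD_mem_airyPk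

/-- The operator `θ` on `P_k`. -/
noncomputable def airyThetaPk (n k : ℕ) : Module.End ℂ (airyPk n k) :=
  (airyTheta n).restrict fun _ => airyTheta_mem_airyPk

lemma comap_map_airyTheta :
    (Submodule.map (airyTheta n) (airyPk n k)).comap (airyPk n k).subtype =
      LinearMap.range (airyThetaPk n k) := by
  rw [airyThetaPk, LinearMap.restrict, LinearMap.range_codRestrict, LinearMap.range_domRestrict]

/-- The weight filtration of `P_k`: level `d` is spanned by the monomials of weight less than
`d`. -/
noncomputable def airyFiltration (n k d : ℕ) : Submodule ℂ (airyPk n k) :=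
  (restrictSupport ℂ {m | Finsupp.weight (airyWeight n) m < d}).comap (airyPk n k).subtype

lemma mem_airyFiltration {d : ℕ} {f : airyPk n k} :
    f ∈ airyFiltration n k d ↔
      ∀ m, coeff m f.1 ≠ 0 → Finsupp.weight (airyWeight n) m < d := by
  simp only [airyFiltration, Submodule.mem_comap, Submodule.subtype_apply, mem_restrictSupport_iff,
    Set.subset_def, Finset.mem_coe, mem_support_iff, Set.mem_ofPred_eq]

lemma mem_airyFiltration_iff_component {d : ℕ} {f : airyPk n k} :
    f ∈ airyFiltration n k d ↔
      ∀ e, d ≤ e → weightedHomogeneousComponent (airyWeight n) e f.1 = 0 := by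
  classical
  rw [mem_airyFiltration]
  refine ⟨fun hf e hde => ?_, fun hf m hm => ?_⟩
  · exact weightedHomogeneousComponent_eq_zero' e f.1 fun m hm hme =>
      (hf m (mem_support_iff.1 hm)).not_ge (hme ▸ hde)
  · by_contra! hdm
    refine hm ?_
    rw [← coeff_zero (R := ℂ) m, ← hf _ hdm, coeff_weightedHomogeneousComponent, if_pos rfl]

lemma isExhaustiveFiltration_airyFiltration : IsExhaustiveFiltration (airyFiltration n k) where
  monotone _ _ hde _ hf :=
    mem_airyFiltration.2 fun m hm => (mem_airyFiltration.1 hf m hm).trans_le hde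
  zero_eq_bot := by
    refine (Submodule.eq_bot_iff _).2 fun f hf => Subtype.ext (MvPolynomial.ext _ _ fun m => ?_)
    by_contra hm
    exact Nat.not_lt_zero _ (mem_airyFiltration.1 hf m hm)
  exists_mem f := by
    refine ⟨weightedTotalDegree (airyWeight n) f.1 + 1, mem_airyFiltration.2 fun m hm => ?_⟩
    exact Nat.lt_succ_of_le (le_weightedTotalDegree _ (mem_support_iff.2 hm))

lemma raisesLevelByOne_airyDPk (hn : 0 < n) {ξ : ℂ} (hξ : IsPrimitiveRoot ξ n)
    (hI : ∀ I : Fin n →₀ ℕ, I.degree = k →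
      Finsupp.weight (fun j : Fin n => ξ ^ (j : ℕ)) I ≠ 0) :
    RaisesLevelByOne (airyFiltration n k) (airyDPk n k) := by
  intro d f
  have hcomp (e : ℕ) : weightedHomogeneousComponent (airyWeight n) (e + 1) (airyDPk n k f).1 =
      airyD n (weightedHomogeneousComponent (airyWeight n) e f.1) :=
    weightedHomogeneousComponent_mkDerivation airyDvals_isWeightedHomogeneous_airyWeight e f.1
  have hzero (e : ℕ) : airyD n (weightedHomogeneousComponent (airyWeight n) e f.1) = 0 ↔
      weightedHomogeneousComponent (airyWeight n) e f.1 = 0 := by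
    have hPk : weightedHomogeneousComponent (airyWeight n) e f.1 ∈ airyPk n k :=
      mem_airyPk.2 <|
        isWeightedHomogeneous_weightedHomogeneousComponent (mem_airyPk.1 f.2) _ e
    refine ⟨fun h => ?_, fun h => by rw [h, map_zero]⟩
    exact eq_zero_of_airyD_eq_zero hn hξ hI hPk
      (weightedHomogeneousComponent_isWeightedHomogeneous e f.1) h
  rw [mem_airyFiltration_iff_component, mem_airyFiltration_iff_component]
  refine ⟨fun h e hde => ?_, fun h e hde => ?_⟩
  · rw [← hzero, ← hcomp, h _ (Nat.succ_le_succ hde)]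
  · obtain _ | e := e
    · exact absurd hde (by lia)
    · rw [hcomp, hzero, h e (Nat.succ_le_succ_iff.1 hde)]

lemma airyThetaPk_sub_airyDPk_mem {d : ℕ} {f : airyPk n k} (hf : f ∈ airyFiltration n k d) :
    airyThetaPk n k f - airyDPk n k f ∈ airyFiltration n k d := by
  have hsub : (airyThetaPk n k f - airyDPk n k f).1 = pderiv 0 f.1 := add_sub_cancel_right _ _
  refine mem_airyFiltration.2 fun m hm => ?_
  rw [hsub, coeff_pderiv] at hm
  have hlt := mem_airyFiltration.1 hf _ (left_ne_zero_of_mul hm)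
  rw [map_add] at hlt
  exact (Nat.le_add_right _ _).trans_lt hlt

lemma raisesLevelByOne_airyThetaPk (hn : 0 < n) {ξ : ℂ} (hξ : IsPrimitiveRoot ξ n)
    (hI : ∀ I : Fin n →₀ ℕ, I.degree = k →
      Finsupp.weight (fun j : Fin n => ξ ^ (j : ℕ)) I ≠ 0) :
    RaisesLevelByOne (airyFiltration n k) (airyThetaPk n k) :=
  (raisesLevelByOne_airyDPk hn hξ hI).of_sub_mem isExhaustiveFiltration_airyFiltration
    fun _ _ => airyThetaPk_sub_airyDPk_mem

/-- The exponents of the monomials of `P_k` of weight less than `d`. -/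
def airyMonomials (n k d : ℕ) : Set (Fin (n + 1) →₀ ℕ) :=
  {m | m.tail.degree = k ∧ Finsupp.weight (airyWeight n) m < d}

lemma map_subtype_airyFiltration (d : ℕ) :
    (airyFiltration n k d).map (airyPk n k).subtype = restrictSupport ℂ (airyMonomials n k d) := by
  have hPk : airyPk n k = restrictSupport ℂ {m | m.tail.degree = k} := by
    ext f
    simp only [mem_airyPk, IsWeightedHomogeneous, weight_airyDegree, mem_restrictSupport_iff,
      Set.subset_def, Finset.mem_coe, mem_support_iff, Set.mem_ofPred_eq]
  rw [airyFiltration, Submodule.map_comap_subtype, hPk, ← restrictSupport_inter]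
  rfl

lemma finite_airyMonomials (hn : 0 < n) (k d : ℕ) : (airyMonomials n k d).Finite := by
  refine ((Set.finite_lt_nat d).image2 Finsupp.cons (Finsupp.finite_of_degree_le k)).subset ?_
  rintro m ⟨hdeg, hlt⟩
  rw [weight_airyWeight] at hlt
  exact ⟨m 0, (Nat.le_mul_of_pos_left _ hn).trans_lt (le_self_add.trans_lt hlt), m.tail, hdeg.le,
    m.cons_tail⟩

lemma weight_val_le (I : Fin n →₀ ℕ) :
    Finsupp.weight (fun i : Fin n => (i : ℕ)) I ≤ n * I.degree := by
  rw [Finsupp.weight_eq_sum, Finsupp.degree_eq_sum, Finset.mul_sum]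
  exact Finset.sum_le_sum fun i _ => by
    rw [smul_eq_mul, mul_comm]
    exact Nat.mul_le_mul_right _ i.2.le

lemma add_single_zero_mem_airyMonomials {d : ℕ} {m : Fin (n + 1) →₀ ℕ} :
    m + Finsupp.single 0 1 ∈ airyMonomials n k (d + n) ↔ m ∈ airyMonomials n k d := by
  have htail : (m + Finsupp.single 0 1).tail = m.tail := by
    ext i
    simp [Finsupp.tail_apply]
  simp only [airyMonomials, Set.mem_ofPred_eq, htail, map_add, Finsupp.weight_single, one_smul,
    airyWeight, Fin.cons_zero, Nat.add_lt_add_iff_right]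

lemma airyMonomials_add {d : ℕ} (hd : n * k < d + n) :
    airyMonomials n k (d + n) = (· + Finsupp.single 0 1) '' airyMonomials n k d ∪
      Finsupp.cons 0 '' {I | I.degree = k} := by
  ext m
  constructor
  · intro hm
    rcases eq_or_ne (m 0) 0 with hm0 | hm0
    · exact .inr ⟨m.tail, hm.1, hm0 ▸ m.cons_tail⟩
    · have hsub := Finsupp.sub_add_single_one_cancel hm0
      exact .inl ⟨_, add_single_zero_mem_airyMonomials.1 (hsub.symm ▸ hm), hsub⟩
  · rintro (⟨m, hm, rfl⟩ | ⟨I, rfl, rfl⟩)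
    · exact add_single_zero_mem_airyMonomials.2 hm
    · refine ⟨by rw [Finsupp.tail_cons], ?_⟩
      rw [weight_airyWeight, Finsupp.cons_zero, Finsupp.tail_cons, mul_zero, zero_add]
      exact (weight_val_le I).trans_lt hd

lemma ncard_airyMonomials_add (hn : 0 < n) {d : ℕ} (hd : n * k ≤ d) :
    (airyMonomials n k (d + n)).ncard =
      (airyMonomials n k d).ncard + (k + n - 1).choose (n - 1) := by
  have hdisj : Disjoint ((· + Finsupp.single 0 1) '' airyMonomials n k d)
      (Finsupp.cons 0 '' {I : Fin n →₀ ℕ | I.degree = k}) := by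
    rw [Set.disjoint_left]
    rintro _ ⟨m, -, rfl⟩ ⟨I, -, hI⟩
    simpa using DFunLike.congr_fun hI 0
  have hunion := airyMonomials_add (n := n) (k := k) (d := d) (by lia)
  have hfin := hunion ▸ finite_airyMonomials hn k (d + n)
  rw [hunion, Set.ncard_union_eq hdisj (hfin.subset Set.subset_union_left)
    (hfin.subset Set.subset_union_right), Set.ncard_image_of_injective _ (add_left_injective _),
    Set.ncard_image_of_injective _ (Finsupp.cons_right_injective 0), ncard_setOf_degree_eq,
    Fintype.card_fin, add_comm n k,
    Nat.choose_symm_of_eq_add (show k + n - 1 = k + (n - 1) by lia)]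

lemma finrank_airyFiltration (d : ℕ) :
    Module.finrank ℂ (airyFiltration n k d) = (airyMonomials n k d).ncard := by
  rw [← finrank_restrictSupport (R := ℂ), ← map_subtype_airyFiltration,
    Submodule.finrank_map_subtype_eq]

lemma finiteDimensional_airyFiltration (hn : 0 < n) (d : ℕ) :
    FiniteDimensional ℂ (airyFiltration n k d) := by
  have := finite_restrictSupport (R := ℂ) (finite_airyMonomials hn k d)
  rw [← map_subtype_airyFiltration] at this
  exact Module.Finite.equiv (Submodule.equivSubtypeMap _ (airyFiltration n k d)).symm

lemma finrank_airyFiltration_add (hn : 0 < n) {d : ℕ} (hd : n * k ≤ d) :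
    Module.finrank ℂ (airyFiltration n k (d + n)) =
      Module.finrank ℂ (airyFiltration n k d) + (k + n - 1).choose (n - 1) := by
  rw [finrank_airyFiltration, finrank_airyFiltration, ncard_airyMonomials_add hn hd]

end Airy

/-- Let `n ≥ 2`, `k ≥ 1`, `ξ` a primitive `n`-th root of unity, and
assume there is no `I ∈ ℕ^{n}` with `|I| = k` and `Σ_i I_i ξ^i = 0`.  Then
`θ = ∂_z + D` is injective on `P_k`, maps `P_k` into `P_k`, its cokernel on `P_k` is a
finite-dimensional `ℂ`-vector space, and `n·dim_ℂ coker(θ) = C(k+n-1, n-1)`. -/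
theorem airy_deRham_dimension (n k : ℕ) (hn : 2 ≤ n) (hk : 1 ≤ k) (ξ : ℂ)
    (hξ : IsPrimitiveRoot ξ n)
    (hno : ¬∃ I : Fin n → ℕ,
      (∑ i, I i) = k ∧ (∑ i : Fin n, (I i : ℂ) * ξ ^ (i : ℕ)) = 0) :
    Set.InjOn (airyTheta n) (airyPk n k) ∧
    Submodule.map (airyTheta n) (airyPk n k) ≤ airyPk n k ∧
    FiniteDimensional ℂ
      (↥(airyPk n k) ⧸
        Submodule.comap (airyPk n k).subtype
          (Submodule.map (airyTheta n) (airyPk n k))) ∧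
    n * Module.finrank ℂ
      (↥(airyPk n k) ⧸
        Submodule.comap (airyPk n k).subtype
          (Submodule.map (airyTheta n) (airyPk n k))) = (k + n - 1).choose (n - 1) := by
  have hn0 : 0 < n := by lia
  have hI (I : Fin n →₀ ℕ) (hIk : I.degree = k) :
      Finsupp.weight (fun j : Fin n => ξ ^ (j : ℕ)) I ≠ 0 := fun hI0 =>
    hno ⟨I, by rw [← hIk, Finsupp.degree_eq_sum], by
      simpa only [Finsupp.weight_eq_sum, nsmul_eq_mul] using hI0⟩
  have hF := isExhaustiveFiltration_airyFiltration (n := n) (k := k)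
  have hθ := raisesLevelByOne_airyThetaPk hn0 hξ hI
  have hfin := finiteDimensional_airyFiltration (k := k) hn0
  rw [comap_map_airyTheta]
  refine ⟨fun f hf g hg hfg => ?_, ?_, ?_⟩
  · have hfg' : (⟨f, hf⟩ : airyPk n k) = ⟨g, hg⟩ := hθ.injective hF (Subtype.ext hfg)
    exact congrArg Subtype.val hfg'
  · exact Submodule.map_le_iff_le_comap.2 fun _ => airyTheta_mem_airyPk
  · exact finrank_quotient_range_of_periodic_growth hF hθ hn0
      fun _ => finrank_airyFiltration_add hn0
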